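/- Congruence form of the evaluation lemma. Let 𝒢 be a polynomial in x₁, x₂, y₁, y₂ over a field of characteristic zero which is bihomogeneous of orders (p,q), and let ℓ ≥ m ≥ 0 with ℓ−m ≤ min(p,q). Then Ω_{xy}^ℓ((x y)^m · 𝒢) − μ(p,q;ℓ,m)·Ω_{xy}^{ℓ−m}𝒢 lies in the ideal generated by (x y) = x₁y₂ − y₁x₂ in the polynomial ring, where μ(p,q;ℓ,m) = (ℓ!/(ℓ−m)!) · ((p+q−ℓ+2m+1)!/((p+q−ℓ+m+1)!)). -/

import Mathlib

/-!
The operators `Ω` and multiplication by `(x y)` satisfy `[Ω, (x y)] = E + 2`, where `E = ∑ Xᵢ ∂ᵢ` is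
the Euler operator (`omega_bracket_mul`). Since `Ω` lowers the total degree by two, on a form `F` of
degree `d` this gives `Ω^ℓ ((x y) F) = (x y) Ω^ℓ F + ℓ (d + 3 - ℓ) Ω^(ℓ-1) F`
(`omega_iterate_bracket_mul`). With `F = (x y)^(m-1) G` of degree `p + q + 2m - 2`, the left side is
`ℓ (p + q + 2m + 1 - ℓ) Ω^(ℓ-1) ((x y)^(m-1) G)` modulo `(x y)`, and `mu` obeys the same recursion
(`mu_succ`), so the congruence follows by induction on `m`.
-/

open MvPolynomial

/-- The Cayley Omega operator `Ω_{xy} = ∂²/∂x₁∂y₂ − ∂²/∂y₁∂x₂`, where the four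
variables are indexed as `x₁ = 0`, `x₂ = 1`, `y₁ = 2`, `y₂ = 3`. -/
noncomputable def Omega {k : Type*} [CommRing k] (G : MvPolynomial (Fin 4) k) :
    MvPolynomial (Fin 4) k :=
  pderiv (0 : Fin 4) (pderiv 3 G) - pderiv 2 (pderiv 1 G)

/-- The bracket factor `(x y) = x₁y₂ − y₁x₂`. -/
noncomputable def bracket {k : Type*} [CommRing k] : MvPolynomial (Fin 4) k :=
  X 0 * X 3 - X 2 * X 1

/-- A polynomial in `x₁, x₂, y₁, y₂` is bihomogeneous of orders `(p,q)` if it is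
homogeneous of degree `p` in `(x₁,x₂)` and of degree `q` in `(y₁,y₂)`. -/
def Bihomogeneous {k : Type*} [CommRing k] (G : MvPolynomial (Fin 4) k)
    (p q : ℕ) : Prop :=
  G.IsWeightedHomogeneous ![1, 1, 0, 0] p ∧ G.IsWeightedHomogeneous ![0, 0, 1, 1] q

/-- `μ(p,q;ℓ,m) = (ℓ!/(ℓ−m)!)·((p+q−ℓ+2m+1)!/((p+q−ℓ+m+1)!))`. -/
noncomputable def mu (p q ℓ m : ℕ) : ℚ :=
  ((ℓ.factorial : ℚ) / ((ℓ - m).factorial : ℚ)) *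
    (((p + q + 2 * m + 1 - ℓ).factorial : ℚ) / ((p + q + m + 1 - ℓ).factorial : ℚ))

/-- `F` is an eigenvector of the Euler operator `∑ Xᵢ ∂ᵢ` with eigenvalue `d`. Letting the degree
`d` live in `k` makes the shifts by `Omega` free of truncated subtraction. -/
def EulerDegree {k : Type*} [CommRing k] (F : MvPolynomial (Fin 4) k) (d : k) : Prop :=
  X 0 * pderiv 0 F + X 1 * pderiv 1 F + X 2 * pderiv 2 F + X 3 * pderiv 3 F = C d * F

lemma pderiv_pderiv_comm {k : Type*} [CommRing k] (i j : Fin 4) (F : MvPolynomial (Fin 4) k) :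
    pderiv i (pderiv j F) = pderiv j (pderiv i F) := by
  -- The commutator of two derivations is a derivation, so the variables suffice.
  have h : ⁅pderiv (R := k) i, pderiv (R := k) j⁆ = 0 := by
    apply MvPolynomial.derivation_ext
    intro l
    simp only [Derivation.commutator_apply, pderiv_X, Derivation.zero_apply, Pi.single_apply]
    split_ifs <;> simp
  have h' := congrArg (fun D => D F) h
  simpa [Derivation.commutator_apply, sub_eq_zero] using h'

lemma EulerDegree.pderiv {k : Type*} [CommRing k] {F : MvPolynomial (Fin 4) k} {d : k}
    (h : EulerDegree F d) (i : Fin 4) : EulerDegree (pderiv i F) (d - 1) := by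
  have h' := congrArg (MvPolynomial.pderiv i) h
  simp only [map_add, pderiv_mul, pderiv_C] at h'
  unfold EulerDegree
  rw [pderiv_pderiv_comm 0 i, pderiv_pderiv_comm 1 i, pderiv_pderiv_comm 2 i,
    pderiv_pderiv_comm 3 i, C_sub, C_1]
  fin_cases i <;> simp [pderiv_X] at h' ⊢ <;> linear_combination h'

lemma EulerDegree.omega {k : Type*} [CommRing k] {F : MvPolynomial (Fin 4) k} {d : k}
    (h : EulerDegree F d) : EulerDegree (Omega F) (d - 2) := by
  have h1 := (h.pderiv 3).pderiv 0
  have h2 := (h.pderiv 1).pderiv 2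
  rw [sub_sub, one_add_one_eq_two] at h1 h2
  unfold EulerDegree at *
  simp only [Omega, map_sub] at *
  linear_combination h1 - h2

lemma EulerDegree.omega_iterate {k : Type*} [CommRing k] {F : MvPolynomial (Fin 4) k} {d : k}
    (h : EulerDegree F d) (n : ℕ) : EulerDegree (Omega^[n] F) (d - 2 * n) := by
  induction n with
  | zero => simpa using h
  | succ n ih =>
    rw [Function.iterate_succ_apply']
    have h' := ih.omega
    rwa [show d - 2 * n - 2 = d - 2 * ((n + 1 : ℕ) : k) by push_cast; ring] at h'

lemma EulerDegree.bracket_mul {k : Type*} [CommRing k] {F : MvPolynomial (Fin 4) k} {d : k}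
    (h : EulerDegree F d) : EulerDegree (bracket * F) (d + 2) := by
  have h2 : (C 2 : MvPolynomial (Fin 4) k) = 2 := map_ofNat C 2
  unfold EulerDegree at *
  simp only [bracket, pderiv_mul, map_sub, pderiv_X, C_add, h2]
  simp
  linear_combination (X 0 * X 3 - X 2 * X 1) * h

lemma EulerDegree.bracket_pow_mul {k : Type*} [CommRing k] {F : MvPolynomial (Fin 4) k} {d : k}
    (h : EulerDegree F d) (m : ℕ) : EulerDegree (bracket ^ m * F) (d + 2 * m) := by
  induction m with
  | zero => simpa using h
  | succ m ih =>
    have h' := ih.bracket_mul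
    rwa [← mul_assoc, ← pow_succ',
      show d + 2 * m + 2 = d + 2 * ((m + 1 : ℕ) : k) by push_cast; ring] at h'

lemma Bihomogeneous.eulerDegree {k : Type*} [CommRing k] {G : MvPolynomial (Fin 4) k} {p q : ℕ}
    (h : Bihomogeneous G p q) : EulerDegree G ((p + q : ℕ) : k) := by
  have h1 := h.1.sum_weight_X_mul_pderiv
  have h2 := h.2.sum_weight_X_mul_pderiv
  simp [Fin.sum_univ_four] at h1 h2
  unfold EulerDegree
  simp only [Nat.cast_add, C_add, map_natCast]
  linear_combination h1 + h2

/-- The commutation relation `[Ω, (x y)] = E + 2`, with `E` the Euler operator. -/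
lemma omega_bracket_mul {k : Type*} [CommRing k] {F : MvPolynomial (Fin 4) k} {d : k}
    (h : EulerDegree F d) : Omega (bracket * F) = bracket * Omega F + C (d + 2) * F := by
  have h2 : (C 2 : MvPolynomial (Fin 4) k) = 2 := map_ofNat C 2
  unfold EulerDegree at h
  simp only [Omega, bracket, pderiv_mul, map_sub, map_add, pderiv_X, h2]
  simp
  linear_combination h

lemma omega_add {k : Type*} [CommRing k] (F G : MvPolynomial (Fin 4) k) :
    Omega (F + G) = Omega F + Omega G := by
  simp only [Omega, map_add]; ring

lemma omega_C_mul {k : Type*} [CommRing k] (c : k) (F : MvPolynomial (Fin 4) k) :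
    Omega (C c * F) = C c * Omega F := by
  simp only [Omega, pderiv_C_mul]; ring

/-- Moving `(x y)` past `n + 1` copies of `Ω`; the coefficient is
`∑_{j ≤ n} (d - 2j + 2) = (n + 1)(d + 2 - n)`. -/
lemma omega_iterate_bracket_mul {k : Type*} [CommRing k] {F : MvPolynomial (Fin 4) k} {d : k}
    (h : EulerDegree F d) (n : ℕ) :
    Omega^[n + 1] (bracket * F) =
      bracket * Omega^[n + 1] F + C ((n + 1) * (d + 2 - n)) * Omega^[n] F := by
  induction n with
  | zero => simpa using omega_bracket_mul h
  | succ n ih =>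
    rw [Function.iterate_succ_apply', ih, omega_add, omega_C_mul,
      omega_bracket_mul (h.omega_iterate (n + 1)), ← Function.iterate_succ_apply' Omega n,
      ← Function.iterate_succ_apply' Omega (n + 1), add_assoc, ← add_mul, ← C_add]
    congr 3
    push_cast
    ring

/-- The hypothesis makes the truncated subtractions in `mu` exact. -/
lemma mu_succ (p q ℓ m : ℕ) (h : ℓ ≤ p + q + m) :
    mu p q (ℓ + 1) (m + 1) = (ℓ + 1) * ((p + q : ℕ) + 2 * m + 2 - ℓ) * mu p q ℓ m := by
  obtain ⟨a, ha⟩ := Nat.exists_eq_add_of_le h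
  have e1 : p + q + 2 * (m + 1) + 1 - (ℓ + 1) = (m + a + 1) + 1 := by omega
  have e2 : p + q + (m + 1) + 1 - (ℓ + 1) = a + 1 := by omega
  have e3 : p + q + 2 * m + 1 - ℓ = m + a + 1 := by omega
  have e4 : p + q + m + 1 - ℓ = a + 1 := by omega
  have e5 : ((p + q : ℕ) : ℚ) + 2 * m + 2 - ℓ = (m + a + 1 : ℕ) + 1 := by
    have : ((p + q + m : ℕ) : ℚ) = (ℓ + a : ℕ) := by rw [ha]
    push_cast at this ⊢
    linarith
  rw [e5]
  unfold mu
  rw [e1, e2, e3, e4, Nat.add_sub_add_right, Nat.factorial_succ ℓ, Nat.factorial_succ (m + a + 1)]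
  push_cast
  ring

/-- Congruence form of the evaluation lemma: for `𝒢` bihomogeneous of orders `(p,q)`
and `ℓ ≥ m ≥ 0` with `ℓ−m ≤ min(p,q)`,
`Ω_{xy}^ℓ((x y)^m·𝒢) − μ(p,q;ℓ,m)·Ω_{xy}^{ℓ−m}𝒢` lies in the ideal `((x y))`. -/
theorem omega_evaluation_congruence {k : Type*} [Field k] [CharZero k]
    (G : MvPolynomial (Fin 4) k) (p q ℓ m : ℕ)
    (hml : m ≤ ℓ) (hlm : ℓ - m ≤ min p q)
    (hG : Bihomogeneous G p q) :
    Omega^[ℓ] (bracket ^ m * G) - C ((mu p q ℓ m : ℚ) : k) * Omega^[ℓ - m] G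
      ∈ Ideal.span ({bracket} : Set (MvPolynomial (Fin 4) k)) := by
  have hE := hG.eulerDegree
  induction m generalizing ℓ with
  | zero =>
    have hmu : mu p q ℓ 0 = 1 := by
      unfold mu
      simp [Nat.factorial_ne_zero]
    simp [hmu]
  | succ m ih =>
    obtain ⟨n, rfl⟩ : ∃ n, ℓ = n + 1 := ⟨ℓ - 1, by omega⟩
    rw [Nat.add_sub_add_right] at hlm ⊢
    have hn := ih n (by omega) hlm
    rw [Ideal.mem_span_singleton] at hn ⊢
    rw [pow_succ', mul_assoc, omega_iterate_bracket_mul (hE.bracket_pow_mul m),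
      mu_succ p q n m (by omega)]
    obtain ⟨r, hr⟩ := hn
    refine ⟨Omega^[n + 1] (bracket ^ m * G) +
      C (((n : k) + 1) * (((p + q : ℕ) : k) + 2 * m + 2 - n)) * r, ?_⟩
    push_cast
    simp only [C_mul] at hr ⊢
    linear_combination
      C ((n : k) + 1) * C ((p : k) + q + 2 * m + 2 - n) * hr
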